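/- Let p ∈ (0,1] and let ξ ∼ Bernoulli(p). Then the smoothed estimator ḡ_T is unbiased for ∇F_T, i.e. E_ξ[ḡ_T(x,ξ)] = ∇F_T(x) for all x ∈ ℝ^T, and its variance satisfies E_ξ[‖ḡ_T(x,ξ) − ∇F_T(x)‖²] ≤ 23²·(1−p)/p for all x ∈ ℝ^T (Euclidean norm). -/

import Mathlib

open MeasureTheory

/-- The scalar function `Ψ` of the hard-instance construction. -/
noncomputable def Psi (t : ℝ) : ℝ :=
  if t ≤ 1 / 2 then 0 else Real.exp (1 - 1 / (2 * t - 1) ^ 2)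

/-- The scalar function `Φ(t) = √e ∫_{−∞}^t e^{−τ²/2} dτ` of the hard-instance
construction. -/
noncomputable def Phi (t : ℝ) : ℝ :=
  Real.sqrt (Real.exp 1) * ∫ τ in Set.Iic t, Real.exp (-τ ^ 2 / 2)

/-- The hard-instance chain function `F_T` on `ℝ^{T+1}` (so the paper's dimension `T ≥ 1`
is `T + 1` here; the paper's coordinate `xᵢ`, `1 ≤ i ≤ T`, is the zero-based coordinate
`x (i−1)`). -/
noncomputable def chainF (T : ℕ) (x : EuclideanSpace ℝ (Fin (T + 1))) : ℝ :=
  -Psi 1 * Phi (x 0) +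
    ∑ i : Fin T,
      (Psi (-(x i.castSucc)) * Phi (-(x i.succ)) - Psi (x i.castSucc) * Phi (x i.succ))

/-- `prog α x` is the largest one-based index `i ∈ {0, 1, …, n}` such that `|xᵢ| > α`
(with the paper's convention `x₀ ≡ 1`, so the value `0` is allowed and returned when no
coordinate exceeds `α`). -/
noncomputable def prog {n : ℕ} (α : ℝ) (x : EuclideanSpace ℝ (Fin n)) : ℕ :=
  (Finset.univ.filter fun i : Fin n => α < |x i|).sup fun i => (i : ℕ) + 1

/-- The bump function `Λ` supported on `(1/4, 1/2)`. -/
noncomputable def Lam (t : ℝ) : ℝ :=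
  if 1 / 4 < t ∧ t < 1 / 2 then
    Real.exp (-1 / (100 * (t - 1 / 4) * (1 / 2 - t)))
  else 0

/-- The integrated bump function `Γ(t) = (∫_{1/4}^t Λ) / (∫_{1/4}^{1/2} Λ)`. -/
noncomputable def Gam (t : ℝ) : ℝ :=
  (∫ τ in (1 / 4 : ℝ)..t, Lam τ) / ∫ τ in (1 / 4 : ℝ)..(1 / 2 : ℝ), Lam τ

/-- `Θ_i(x) = Γ(1 − ‖(Γ(|x_i|), …, Γ(|x_T|))‖₂)`. -/
noncomputable def Theta (T : ℕ) (x : EuclideanSpace ℝ (Fin (T + 1)))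
    (i : Fin (T + 1)) : ℝ :=
  Gam (1 - Real.sqrt (∑ j ∈ Finset.univ.filter fun j : Fin (T + 1) => i ≤ j,
    Gam |x j| ^ 2))

/-- The smoothed estimator `[ḡ_T(x,ξ)]ᵢ = ∂ᵢF_T(x)·(1 + Θᵢ(x)(ξ/p − 1))`, for
`ξ ∈ {0, 1} ⊆ ℝ`. -/
noncomputable def gbar (T : ℕ) (p : ℝ) (x : EuclideanSpace ℝ (Fin (T + 1)))
    (ξ : ℝ) : EuclideanSpace ℝ (Fin (T + 1)) :=
  WithLp.toLp 2 fun i => gradient (chainF T) x i * (1 + Theta T x i * (ξ / p - 1))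


lemma Psi_zero {t : ℝ} (h : |t| < 1 / 2) : Psi t = 0 := by
  unfold Psi; rw [if_pos]; exact (le_abs_self t).trans h.le

lemma Psi_nonneg (t : ℝ) : 0 ≤ Psi t := by
  unfold Psi; split_ifs <;> positivity

lemma Psi_le (t : ℝ) : Psi t ≤ 2.72 := by
  have h1 : Real.exp 1 ≤ 2.72 := by have := Real.exp_one_lt_d9; linarith
  unfold Psi; split_ifs
  · norm_num
  · refine le_trans (Real.exp_le_exp.2 ?_) h1
    have : 0 ≤ 1 / (2 * t - 1) ^ 2 := by positivity
    linarith

lemma Phi_lip (a b : ℝ) : |Phi a - Phi b| ≤ 2 * |a - b| := by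
  have hint : Integrable (fun τ : ℝ => Real.exp (-τ ^ 2 / 2)) := by
    have := integrable_exp_neg_mul_sq (b := 1 / 2) (by norm_num)
    refine this.congr (Filter.Eventually.of_forall fun τ => ?_)
    simp only; congr 1; ring
  have hs : Real.sqrt (Real.exp 1) ≤ 2 := by
    rw [Real.sqrt_le_left (by norm_num)]
    have := Real.exp_one_lt_d9; linarith
  unfold Phi
  rw [← mul_sub, intervalIntegral.integral_Iic_sub_Iic hint.integrableOn hint.integrableOn, abs_mul,
    abs_of_nonneg (Real.sqrt_nonneg _)]
  have h := intervalIntegral.norm_integral_le_of_norm_le_const (a := b) (b := a) (C := 1)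
    (f := fun τ : ℝ => Real.exp (-τ ^ 2 / 2)) (fun τ _ => by
      rw [Real.norm_eq_abs, abs_of_pos (Real.exp_pos _), Real.exp_le_one_iff]
      have := sq_nonneg τ; linarith)
  rw [one_mul, Real.norm_eq_abs] at h
  exact mul_le_mul hs h (abs_nonneg _) (by norm_num)

lemma Lam_nonneg (t : ℝ) : 0 ≤ Lam t := by
  unfold Lam; split_ifs <;> positivity

lemma Lam_le (t : ℝ) : Lam t ≤ 1 := by
  unfold Lam; split_ifs with h
  · rw [Real.exp_le_one_iff]
    apply div_nonpos_of_nonpos_of_nonneg (by norm_num)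
    exact mul_nonneg (mul_nonneg (by norm_num) (by linarith [h.1])) (by linarith [h.2])
  · norm_num

lemma Lam_meas : Measurable Lam := by
  unfold Lam
  refine Measurable.ite ?_ (by fun_prop) measurable_const
  exact measurableSet_Ioo (a := (1 / 4 : ℝ)) (b := 1 / 2)

lemma Lam_int (a b : ℝ) : IntervalIntegrable Lam volume a b := by
  refine (intervalIntegrable_const (c := (1 : ℝ))).mono_fun Lam_meas.aestronglyMeasurable ?_
  refine Filter.Eventually.of_forall fun t => ?_
  simp only [Real.norm_eq_abs, abs_of_nonneg (Lam_nonneg t), abs_one]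
  exact Lam_le t

lemma Lam_pos : 0 < ∫ τ in (1 / 4 : ℝ)..(1 / 2 : ℝ), Lam τ := by
  refine intervalIntegral.intervalIntegral_pos_of_pos_on (Lam_int _ _) ?_ (by norm_num)
  intro t ht
  unfold Lam; rw [if_pos ⟨ht.1, ht.2⟩]; exact Real.exp_pos _

lemma Gam_low {t : ℝ} (h : t ≤ 1 / 4) : Gam t = 0 := by
  unfold Gam
  rw [intervalIntegral.integral_zero_ae, zero_div]
  refine Filter.Eventually.of_forall fun s hs => ?_
  rw [Set.uIoc_of_ge h] at hs
  unfold Lam; rw [if_neg]; rintro ⟨h1, _⟩; linarith [hs.2]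

lemma Gam_high {t : ℝ} (h : 1 / 2 ≤ t) : Gam t = 1 := by
  unfold Gam
  rw [← intervalIntegral.integral_add_adjacent_intervals (Lam_int (1 / 4) (1 / 2)) (Lam_int _ t),
    intervalIntegral.integral_zero_ae (a := 1 / 2), add_zero, div_self Lam_pos.ne']
  refine Filter.Eventually.of_forall fun s hs => ?_
  rw [Set.uIoc_of_le h] at hs
  unfold Lam; rw [if_neg]; rintro ⟨_, h1⟩; linarith [hs.1]

lemma Gam_mem (t : ℝ) : 0 ≤ Gam t ∧ Gam t ≤ 1 := by
  rcases le_total t (1 / 4) with h | h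
  · rw [Gam_low h]; norm_num
  rcases le_total (1 / 2) t with h' | h'
  · rw [Gam_high h']; norm_num
  unfold Gam
  have h1 := intervalIntegral.integral_nonneg (μ := volume) h (fun u _ => Lam_nonneg u)
  have h2 := intervalIntegral.integral_nonneg (μ := volume) h' (fun u _ => Lam_nonneg u)
  have h3 := intervalIntegral.integral_add_adjacent_intervals (Lam_int (1 / 4) t)
    (Lam_int t (1 / 2))
  exact ⟨div_nonneg h1 Lam_pos.le, (div_le_one Lam_pos).2 (by linarith)⟩

lemma Theta_zero (T : ℕ) (x : EuclideanSpace ℝ (Fin (T + 1))) (i j : Fin (T + 1)) (hij : i ≤ j)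
    (hj : 1 / 2 ≤ |x j|) : Theta T x i = 0 := by
  unfold Theta
  apply Gam_low
  have h1 : (1 : ℝ) ≤ ∑ j ∈ Finset.univ.filter (fun j : Fin (T + 1) => i ≤ j), Gam |x j| ^ 2 := by
    have := Finset.single_le_sum (f := fun j => Gam |x j| ^ 2) (fun _ _ => sq_nonneg _)
      (Finset.mem_filter.2 ⟨Finset.mem_univ j, hij⟩)
    simp only [Gam_high hj, one_pow] at this
    exact this
  have := Real.one_le_sqrt.2 h1
  linarith

lemma grad_bound (T : ℕ) (x : EuclideanSpace ℝ (Fin (T + 1))) (i : Fin (T + 1)) (C : ℝ)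
    (hC : 0 ≤ C)
    (h : ∀ᶠ t : ℝ in nhds 0,
      |chainF T (x + t • EuclideanSpace.single i 1) - chainF T x| ≤ C * |t|) :
    |gradient (chainF T) x i| ≤ C := by
  by_cases hd : DifferentiableAt ℝ (chainF T) x
  · have h1 : gradient (chainF T) x i = fderiv ℝ (chainF T) x (EuclideanSpace.single i 1) := by
      rw [show fderiv ℝ (chainF T) x = InnerProductSpace.toDual ℝ _ (gradient (chainF T) x) by simp [gradient], InnerProductSpace.toDual_apply_apply]
      rw [EuclideanSpace.inner_single_right]; simp
    have h2 := hd.hasFDerivAt.hasLineDerivAt (EuclideanSpace.single i (1 : ℝ))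
    rw [← h1] at h2
    have h3 := HasDerivAt.le_of_lip' h2 hC (by simpa using h)
    simpa using h3
  · rw [gradient_eq_zero_of_not_differentiableAt hd]
    simpa using hC

lemma near (a : ℝ) (h : |a| < 1 / 2) : ∀ᶠ t : ℝ in nhds 0, |a + t| < 1 / 2 := by
  have : Continuous fun t : ℝ => |a + t| := by fun_prop
  exact this.continuousAt.eventually_lt continuousAt_const (by simpa using h)

lemma grad_zero (T : ℕ) (x : EuclideanSpace ℝ (Fin (T + 1))) (h : |x 0| < 1 / 2) :
    |gradient (chainF T) x 0| ≤ 23 := by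
  apply grad_bound _ _ _ _ (by norm_num)
  filter_upwards [near _ h] with t ht
  have hy : (x + t • EuclideanSpace.single (0 : Fin (T + 1)) (1 : ℝ)) 0 = x 0 + t := by simp
  have hyn : ∀ j, j ≠ 0 → (x + t • EuclideanSpace.single (0 : Fin (T + 1)) (1 : ℝ)) j = x j := by
    intro j hj; simp [hj]
  generalize x + t • EuclideanSpace.single (0 : Fin (T + 1)) (1 : ℝ) = y at *
  have hs : chainF T y - chainF T x = -(Psi 1 * (Phi (x 0 + t) - Phi (x 0))) := by
    unfold chainF
    have : ∀ j : Fin T, Psi (-(y j.castSucc)) * Phi (-(y j.succ)) - Psi (y j.castSucc) * Phi (y j.succ)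
        = Psi (-(x j.castSucc)) * Phi (-(x j.succ)) - Psi (x j.castSucc) * Phi (x j.succ) := by
      intro j
      by_cases hj : j.castSucc = 0
      · rw [hj, hy, Psi_zero (t := -(x 0 + t)) (by rwa [abs_neg]), Psi_zero ht,
          Psi_zero (t := -(x 0)) (by rwa [abs_neg]), Psi_zero h]
        simp
      · rw [hyn _ hj, hyn _ (Fin.succ_ne_zero j)]
    rw [Finset.sum_congr rfl (fun j _ => this j), hy]; ring
  rw [hs, abs_neg, abs_mul, abs_of_nonneg (Psi_nonneg _)]
  have h1 := Phi_lip (x 0 + t) (x 0)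
  rw [add_sub_cancel_left] at h1
  have := mul_le_mul (Psi_le 1) h1 (abs_nonneg _) (by norm_num)
  linarith [abs_nonneg t]

lemma grad_succ (T : ℕ) (x : EuclideanSpace ℝ (Fin (T + 1))) (k : Fin T)
    (h : |x k.succ| < 1 / 2) :
    |gradient (chainF T) x k.succ| ≤ 2 * (Psi (-(x k.castSucc)) + Psi (x k.castSucc)) := by
  have hA := Psi_nonneg (-(x k.castSucc))
  have hB := Psi_nonneg (x k.castSucc)
  apply grad_bound _ _ _ _ (by linarith)
  filter_upwards [near _ h] with t ht
  have hy : (x + t • EuclideanSpace.single k.succ (1 : ℝ)) k.succ = x k.succ + t := by simp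
  have hyn : ∀ j, j ≠ k.succ → (x + t • EuclideanSpace.single k.succ (1 : ℝ)) j = x j := by
    intro j hj; simp [hj]
  generalize x + t • EuclideanSpace.single k.succ (1 : ℝ) = y at *
  have hs : chainF T y - chainF T x =
      Psi (-(x k.castSucc)) * (Phi (-(x k.succ + t)) - Phi (-(x k.succ)))
      - Psi (x k.castSucc) * (Phi (x k.succ + t) - Phi (x k.succ)) := by
    unfold chainF
    rw [hyn 0 (Fin.succ_ne_zero k).symm, add_sub_add_left_eq_sub, ← Finset.sum_sub_distrib,
      Finset.sum_eq_single k]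
    · rw [hyn k.castSucc (by simp [Fin.ext_iff]), hy]; ring
    · intro j _ hjk
      rw [hyn j.succ (by simpa using hjk)]
      by_cases hj : j.castSucc = k.succ
      · rw [hj, hy, Psi_zero (t := -(x k.succ + t)) (by rwa [abs_neg]), Psi_zero ht,
          Psi_zero (t := -(x k.succ)) (by rwa [abs_neg]), Psi_zero h]
        simp
      · rw [hyn _ hj]; ring
    · simp
  rw [hs]
  have h1 := Phi_lip (x k.succ + t) (x k.succ)
  rw [add_sub_cancel_left] at h1
  have h2 := Phi_lip (-(x k.succ + t)) (-(x k.succ))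
  rw [show -(x k.succ + t) - -(x k.succ) = -t by ring, abs_neg] at h2
  refine (abs_sub _ _).trans ?_
  rw [abs_mul, abs_mul, abs_of_nonneg hA, abs_of_nonneg hB]
  have := mul_le_mul_of_nonneg_left h2 hA
  have := mul_le_mul_of_nonneg_left h1 hB
  linarith

lemma sum_bound (T : ℕ) (x : EuclideanSpace ℝ (Fin (T + 1))) :
    ∑ i, (gradient (chainF T) x i * Theta T x i) ^ 2 ≤ 23 ^ 2 := by
  have key : ∀ i, gradient (chainF T) x i * Theta T x i ≠ 0 → ∀ j, i ≤ j → |x j| < 1 / 2 := by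
    intro i hi j hij
    by_contra hc
    exact hi (by rw [Theta_zero T x i j hij (not_lt.1 hc), mul_zero])
  have lt_zero : ∀ i j, gradient (chainF T) x i * Theta T x i ≠ 0 → i < j →
      gradient (chainF T) x j * Theta T x j = 0 := by
    intro i j hi hij
    have hk := key i hi
    obtain ⟨k, rfl⟩ := Fin.exists_succ_eq.2 (Fin.ne_zero_of_lt hij)
    have h1 := hk k.castSucc (Fin.le_castSucc_iff.2 hij)
    have h2 := grad_succ T x k (hk _ hij.le)
    rw [Psi_zero h1, Psi_zero (t := -(x k.castSucc)) (by rwa [abs_neg])] at h2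
    have h3 : gradient (chainF T) x k.succ = 0 := abs_nonpos_iff.1 (by linarith)
    rw [h3, zero_mul]
  by_cases hall : ∀ i, gradient (chainF T) x i * Theta T x i = 0
  · simp [hall]
  push Not at hall
  obtain ⟨i, hi⟩ := hall
  rw [Finset.sum_eq_single i]
  · rw [← sq_abs, abs_mul]
    have hg : |gradient (chainF T) x i| ≤ 23 := by
      have hxi := key i hi i le_rfl
      rcases Fin.eq_zero_or_eq_succ i with rfl | ⟨k, rfl⟩
      · exact grad_zero T x hxi
      · have := grad_succ T x k hxi
        have := Psi_le (-(x k.castSucc))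
        have := Psi_le (x k.castSucc)
        linarith
    have ht : |Theta T x i| ≤ 1 := by
      unfold Theta
      rw [abs_of_nonneg (Gam_mem _).1]; exact (Gam_mem _).2
    have := mul_le_mul hg ht (abs_nonneg _) (by norm_num)
    rw [mul_one] at this
    exact pow_le_pow_left₀ (by positivity) this 2
  · intro j _ hj
    rcases lt_or_gt_of_ne hj with hlt | hlt
    · by_contra hc
      exact hi (lt_zero j i (fun h => hc (by rw [h]; ring)) hlt)
    · rw [lt_zero i j hi hlt]; ring
  · simp

lemma norm_gbar (T : ℕ) (p ξ : ℝ) (x : EuclideanSpace ℝ (Fin (T + 1))) :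
    ‖gbar T p x ξ - gradient (chainF T) x‖ ^ 2 =
      (∑ i, (gradient (chainF T) x i * Theta T x i) ^ 2) * (ξ / p - 1) ^ 2 := by
  rw [EuclideanSpace.norm_sq_eq, Finset.sum_mul]
  refine Finset.sum_congr rfl fun i _ => ?_
  simp only [gbar, PiLp.sub_apply, Real.norm_eq_abs, sq_abs]
  ring

/-- For `ξ ∼ Bernoulli(p)` (so `ξ = 1` with probability `p` and
`ξ = 0` with probability `1 − p`), the smoothed estimator `ḡ_T` is unbiased for
`∇F_T` and its variance is at most `23²(1−p)/p`.  (Stated for dimension `T + 1`,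
i.e. for every paper dimension `T ≥ 1`; Bernoulli expectations are written out as
`p·(value at ξ=1) + (1−p)·(value at ξ=0)`.) -/
theorem gbar_unbiased_and_variance
    (T : ℕ) (p : ℝ) (hp : p ∈ Set.Ioc (0 : ℝ) 1)
    (x : EuclideanSpace ℝ (Fin (T + 1))) :
    p • gbar T p x 1 + (1 - p) • gbar T p x 0 = gradient (chainF T) x
      ∧ p * ‖gbar T p x 1 - gradient (chainF T) x‖ ^ 2
          + (1 - p) * ‖gbar T p x 0 - gradient (chainF T) x‖ ^ 2
        ≤ 23 ^ 2 * (1 - p) / p := by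
  have hp0 : p ≠ 0 := hp.1.ne'
  constructor
  · ext i
    simp only [gbar, PiLp.add_apply, PiLp.smul_apply, smul_eq_mul]
    field_simp
    ring
  · rw [norm_gbar, norm_gbar]
    have h := sum_bound T x
    generalize ∑ i, (gradient (chainF T) x i * Theta T x i) ^ 2 = S at *
    have e : p * (S * (1 / p - 1) ^ 2) + (1 - p) * (S * (0 / p - 1) ^ 2) = S * (1 - p) / p := by
      field_simp; ring
    rw [e]
    have h1 : 0 ≤ 1 - p := by linarith [hp.2]
    have h0 := hp.1.le
    gcongr
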